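/- (S-link pairs) Let n ≥ 3. Let l and x be elements of one level L₁ of M_{n,n} with l the link element of L₁ and x ≠ l, and let L₂ be the other level. If S = {l} and T = L₂ ∪ {x}, then (S, T) is a maximal ST-pair of M_{n,n}. -/

import Mathlib

set_option linter.unreachableTactic false
set_option linter.unusedTactic false
set_option linter.unnecessarySeqFocus false

/-- The underlying set of the lattice `M_{n,n}`: a bottom element `0`, a top
element `1`, and two levels `a₁, …, aₙ` and `b₁, …, bₙ`.  Here `a i` (for
`i : Fin n`) stands for `a_{i+1}` and `b j` for `b_{j+1}`, so the link elements
are `aₙ = a ⟨n-1, _⟩` and `b₁ = b ⟨0, _⟩`. -/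
inductive Mnn (n : ℕ) : Type where
  | bot : Mnn n
  | top : Mnn n
  | a : Fin n → Mnn n
  | b : Fin n → Mnn n
deriving DecidableEq

namespace Mnn

/-- The order of `M_{n,n}`: `0` is least, `1` is greatest, `aᵢ ≤ b₁` for every
`i`, `aₙ ≤ bⱼ` for every `j`, and there are no other comparabilities besides
those forced by reflexivity. -/
def le {n : ℕ} : Mnn n → Mnn n → Prop
  | .bot, _ => True
  | .top, .top => True
  | .top, .bot => False
  | .top, .a _ => False
  | .top, .b _ => False
  | .a _, .top => True
  | .a _, .bot => False
  | .a i, .a j => i = j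
  | .a i, .b j => (j : ℕ) = 0 ∨ (i : ℕ) = n - 1
  | .b _, .top => True
  | .b _, .bot => False
  | .b _, .a _ => False
  | .b i, .b j => i = j

/-- The join operation of `M_{n,n}`. -/
def sup {n : ℕ} : Mnn n → Mnn n → Mnn n
  | .bot, x => x
  | .top, _ => .top
  | .a i, .bot => .a i
  | .a _, .top => .top
  | .a i, .a j => if i = j then .a i else .b ⟨0, Nat.lt_of_le_of_lt (Nat.zero_le _) i.isLt⟩
  | .a i, .b j => if (j : ℕ) = 0 ∨ (i : ℕ) = n - 1 then .b j else .top
  | .b i, .bot => .b i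
  | .b _, .top => .top
  | .b i, .a j => if (i : ℕ) = 0 ∨ (j : ℕ) = n - 1 then .b i else .top
  | .b i, .b j => if i = j then .b i else .top

/-- The meet operation of `M_{n,n}`. -/
def inf {n : ℕ} : Mnn n → Mnn n → Mnn n
  | .bot, _ => .bot
  | .top, x => x
  | .a _, .bot => .bot
  | .a i, .top => .a i
  | .a i, .a j => if i = j then .a i else .bot
  | .a i, .b j => if (j : ℕ) = 0 ∨ (i : ℕ) = n - 1 then .a i else .bot
  | .b _, .bot => .bot
  | .b i, .top => .b i
  | .b i, .a j => if (i : ℕ) = 0 ∨ (j : ℕ) = n - 1 then .a j else .bot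
  | .b i, .b j => if i = j then .b i
      else .a ⟨n - 1, Nat.sub_lt (Nat.lt_of_le_of_lt (Nat.zero_le _) i.isLt) Nat.one_pos⟩

theorem le_refl' {n : ℕ} (x : Mnn n) : le x x := by cases x <;> simp [le]

theorem le_trans' {n : ℕ} (x y z : Mnn n) (hxy : le x y) (hyz : le y z) : le x z := by
  cases x <;> cases y <;> cases z <;> simp_all [le] <;> omega

theorem le_antisymm' {n : ℕ} (x y : Mnn n) (hxy : le x y) (hyx : le y x) : x = y := by
  cases x <;> cases y <;> simp_all [le]

theorem le_sup_left' {n : ℕ} (x y : Mnn n) : le x (sup x y) := by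
  cases x <;> cases y <;> dsimp only [sup] <;> (try split_ifs) <;> simp_all [le]

theorem le_sup_right' {n : ℕ} (x y : Mnn n) : le y (sup x y) := by
  cases x <;> cases y <;> dsimp only [sup] <;> (try split_ifs) <;> simp_all [le]

theorem sup_le' {n : ℕ} (x y z : Mnn n) (hxz : le x z) (hyz : le y z) :
    le (sup x y) z := by
  cases x <;> cases y <;> cases z <;> dsimp only [sup] <;> (try split_ifs) <;>
    simp_all [le, Fin.ext_iff] <;> omega

theorem inf_le_left' {n : ℕ} (x y : Mnn n) : le (inf x y) x := by
  cases x <;> cases y <;> dsimp only [inf] <;> (try split_ifs) <;> simp_all [le]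

theorem inf_le_right' {n : ℕ} (x y : Mnn n) : le (inf x y) y := by
  cases x <;> cases y <;> dsimp only [inf] <;> (try split_ifs) <;> simp_all [le]

theorem le_inf' {n : ℕ} (x y z : Mnn n) (hxy : le x y) (hxz : le x z) :
    le x (inf y z) := by
  cases x <;> cases y <;> cases z <;> dsimp only [inf] <;> (try split_ifs) <;>
    simp_all [le, Fin.ext_iff] <;> omega

/-- `M_{n,n}` is a lattice. -/
instance instLattice (n : ℕ) : Lattice (Mnn n) where
  le := le
  sup := sup
  inf := inf
  le_refl := le_refl'
  le_trans := le_trans'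
  le_antisymm := le_antisymm'
  le_sup_left := le_sup_left'
  le_sup_right := le_sup_right'
  sup_le := sup_le'
  inf_le_left := inf_le_left'
  inf_le_right := inf_le_right'
  le_inf := le_inf'

/-- `M_{n,n}* = M_{n,n} ∖ {0, 1}`, the set of non-identity elements. -/
def star (n : ℕ) : Set (Mnn n) := {x | x ≠ .bot ∧ x ≠ .top}

/-- The level `{a₁, …, aₙ}` of `M_{n,n}`. -/
def aLevel (n : ℕ) : Set (Mnn n) := Set.range Mnn.a

/-- The level `{b₁, …, bₙ}` of `M_{n,n}`. -/
def bLevel (n : ℕ) : Set (Mnn n) := Set.range Mnn.b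

/-- The link element `aₙ` of the level `{a₁, …, aₙ}`. -/
def aLink (n : ℕ) (h : 0 < n) : Mnn n := .a ⟨n - 1, Nat.sub_lt h Nat.one_pos⟩

/-- The link element `b₁` of the level `{b₁, …, bₙ}`. -/
def bLink (n : ℕ) (h : 0 < n) : Mnn n := .b ⟨0, h⟩

end Mnn

/-- `L` is `ST`-meet distributive. -/
def IsSTMeetDistrib {α : Type*} [Lattice α] (S T : Set α) : Prop :=
  ∀ s ∈ S, ∀ t₁ ∈ T, ∀ t₂ ∈ T, s ⊓ (t₁ ⊔ t₂) = (s ⊓ t₁) ⊔ (s ⊓ t₂)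

/-- `L` is `ST`-join distributive. -/
def IsSTJoinDistrib {α : Type*} [Lattice α] (S T : Set α) : Prop :=
  ∀ s ∈ S, ∀ t₁ ∈ T, ∀ t₂ ∈ T, s ⊔ (t₁ ⊓ t₂) = (s ⊔ t₁) ⊓ (s ⊔ t₂)

/-- `L` is `ST`-distributive. -/
def IsSTDistrib {α : Type*} [Lattice α] (S T : Set α) : Prop :=
  IsSTMeetDistrib S T ∧ IsSTJoinDistrib S T

/-- `(S, T)` is a maximal `ST`-pair of `M_{n,n}` (subject to the conditions of
the search problem: `S, T ⊆ M_{n,n}*`, `S ∩ T = ∅`, `S ≠ ∅`, `T ≠ ∅`). -/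
def MaximalSTPair (n : ℕ) (S T : Set (Mnn n)) : Prop :=
  S ⊆ Mnn.star n ∧ T ⊆ Mnn.star n ∧ S ∩ T = ∅ ∧ S.Nonempty ∧ T.Nonempty ∧
  IsSTDistrib S T ∧
  (¬ ∃ S' : Set (Mnn n), S ⊂ S' ∧ S' ⊆ Mnn.star n ∧ S' ∩ T = ∅ ∧ IsSTDistrib S' T) ∧
  (¬ ∃ T' : Set (Mnn n), T ⊂ T' ∧ T' ⊆ Mnn.star n ∧ S ∩ T' = ∅ ∧ IsSTDistrib S T')

theorem IsSTDistrib.mono {α : Type*} [Lattice α] {S S' T T' : Set α} (hS : S ⊆ S') (hT : T ⊆ T')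
    (h : IsSTDistrib S' T') : IsSTDistrib S T :=
  ⟨fun s hs t₁ h₁ t₂ h₂ => h.1 s (hS hs) t₁ (hT h₁) t₂ (hT h₂),
    fun s hs t₁ h₁ t₂ h₂ => h.2 s (hS hs) t₁ (hT h₁) t₂ (hT h₂)⟩

/-- Maximality only has to be tested on one-element extensions of `S` and of `T`. -/
theorem MaximalSTPair.of_forall_notMem {n : ℕ} {S T : Set (Mnn n)} (hS : S ⊆ Mnn.star n)
    (hT : T ⊆ Mnn.star n) (hST : S ∩ T = ∅) (hSne : S.Nonempty) (hTne : T.Nonempty)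
    (hd : IsSTDistrib S T)
    (hS' : ∀ s ∈ Mnn.star n, s ∉ S → s ∉ T → ¬ IsSTDistrib {s} T)
    (hT' : ∀ t ∈ Mnn.star n, t ∉ S → t ∉ T → ¬ IsSTDistrib S (insert t T)) :
    MaximalSTPair n S T := by
  refine ⟨hS, hT, hST, hSne, hTne, hd, ?_, ?_⟩
  · rintro ⟨S', hlt, hsub, hdisj, hd'⟩
    obtain ⟨s, hs, hsS⟩ := Set.exists_of_ssubset hlt
    exact hS' s (hsub hs) hsS (fun hsT => Set.eq_empty_iff_forall_notMem.1 hdisj s ⟨hs, hsT⟩)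
      (hd'.mono (Set.singleton_subset_iff.2 hs) subset_rfl)
  · rintro ⟨T', hlt, hsub, hdisj, hd'⟩
    obtain ⟨t, ht, htT⟩ := Set.exists_of_ssubset hlt
    exact hT' t (hsub ht) (fun htS => Set.eq_empty_iff_forall_notMem.1 hdisj t ⟨htS, ht⟩) htT
      (hd'.mono subset_rfl (Set.insert_subset ht hlt.subset))

namespace Mnn

theorem sup_def {n : ℕ} (x y : Mnn n) : x ⊔ y = sup x y := rfl

theorem inf_def {n : ℕ} (x y : Mnn n) : x ⊓ y = inf x y := rfl

theorem isSTDistrib_aLink {n : ℕ} (h : 0 < n) (i : Fin n) :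
    IsSTDistrib {aLink n h} (bLevel n ∪ {a i}) := by
  constructor <;>
  · rintro s rfl t₁ (⟨j, rfl⟩ | rfl) t₂ (⟨k, rfl⟩ | rfl) <;>
      simp only [sup_def, inf_def, aLink, sup, inf] <;> grind [sup, inf]

theorem isSTDistrib_bLink {n : ℕ} (h : 0 < n) (j : Fin n) :
    IsSTDistrib {bLink n h} (aLevel n ∪ {b j}) := by
  constructor <;>
  · rintro s rfl t₁ (⟨i, rfl⟩ | rfl) t₂ (⟨k, rfl⟩ | rfl) <;>
      simp only [sup_def, inf_def, bLink, sup, inf] <;> grind [sup, inf]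

theorem maximalSTPair_aLink {n : ℕ} (hn : 3 ≤ n) (h : 0 < n) (i : Fin n)
    (hi : a i ≠ aLink n h) : MaximalSTPair n {aLink n h} (bLevel n ∪ {a i}) := by
  have hi' : (i : ℕ) ≠ n - 1 := fun e => hi (congrArg a (Fin.ext e))
  refine .of_forall_notMem ?_ ?_ ?_ ⟨_, rfl⟩ ⟨_, .inr rfl⟩ (isSTDistrib_aLink h i) ?_ ?_
  · rintro _ rfl
    simp [star, aLink]
  · rintro _ (⟨j, rfl⟩ | rfl) <;> simp [star]
  · simpa [aLink, bLevel] using hi.symm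
  · rintro (_ | _ | k | k) hs hsS hsT hd
    · exact hs.1 rfl
    · exact hs.2 rfl
    · have hk : (k : ℕ) ≠ n - 1 := fun e => hsS (congrArg a (Fin.ext e))
      have := hd.1 (a k) rfl (b ⟨1, by omega⟩) (.inl ⟨_, rfl⟩) (b ⟨2, by omega⟩) (.inl ⟨_, rfl⟩)
      simp [sup_def, inf_def, sup, inf, hk] at this
    · exact hsT (.inl ⟨k, rfl⟩)
  · rintro (_ | _ | k | k) ht htS htT hd
    · exact ht.1 rfl
    · exact ht.2 rfl
    · have hk : (k : ℕ) ≠ n - 1 := fun e => htS (congrArg a (Fin.ext e))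
      have hki : k ≠ i := fun e => htT (.inr (congrArg a e))
      have := hd.1 _ rfl (a k) (.inl rfl) (a i) (.inr (.inr rfl))
      simp [sup_def, inf_def, sup, inf, aLink, hki, Fin.ext_iff, hk.symm, hi'.symm] at this
    · exact htT (.inl ⟨k, rfl⟩)

theorem maximalSTPair_bLink {n : ℕ} (hn : 3 ≤ n) (h : 0 < n) (j : Fin n)
    (hj : b j ≠ bLink n h) : MaximalSTPair n {bLink n h} (aLevel n ∪ {b j}) := by
  have hj' : (j : ℕ) ≠ 0 := fun e => hj (congrArg b (Fin.ext e))
  refine .of_forall_notMem ?_ ?_ ?_ ⟨_, rfl⟩ ⟨_, .inr rfl⟩ (isSTDistrib_bLink h j) ?_ ?_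
  · rintro _ rfl
    simp [star, bLink]
  · rintro _ (⟨i, rfl⟩ | rfl) <;> simp [star]
  · simpa [bLink, aLevel] using hj.symm
  · rintro (_ | _ | k | k) hs hsS hsT hd
    · exact hs.1 rfl
    · exact hs.2 rfl
    · exact hsT (.inl ⟨k, rfl⟩)
    · have hk : (k : ℕ) ≠ 0 := fun e => hsS (congrArg b (Fin.ext e))
      have h0 : 0 ≠ n - 1 := by omega
      have h1 : 1 ≠ n - 1 := by omega
      have := hd.2 (b k) rfl (a ⟨0, by omega⟩) (.inl ⟨_, rfl⟩) (a ⟨1, by omega⟩) (.inl ⟨_, rfl⟩)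
      simp [sup_def, inf_def, sup, inf, hk, h0, h1] at this
  · rintro (_ | _ | k | k) ht htS htT hd
    · exact ht.1 rfl
    · exact ht.2 rfl
    · exact htT (.inl ⟨k, rfl⟩)
    · have hk : (k : ℕ) ≠ 0 := fun e => htS (congrArg b (Fin.ext e))
      have hkj : k ≠ j := fun e => htT (.inr (congrArg b e))
      have := hd.2 _ rfl (b k) (.inl rfl) (b j) (.inr (.inr rfl))
      simp [sup_def, inf_def, sup, inf, bLink, hkj, Fin.ext_iff, hk.symm, hj'.symm] at this

end Mnn

/-- S-link pairs are maximal `ST`-pairs of `M_{n,n}`: `S` consists of the link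
of one level `L₁`, and `T` is the other level together with one further
element `x ≠ l` of `L₁`. -/
theorem s_link_maximal (n : ℕ) (hn : 3 ≤ n) :
    (∀ i : Fin n, Mnn.a i ≠ Mnn.aLink n (by omega) →
      MaximalSTPair n {Mnn.aLink n (by omega)} (Mnn.bLevel n ∪ {Mnn.a i})) ∧
    (∀ j : Fin n, Mnn.b j ≠ Mnn.bLink n (by omega) →
      MaximalSTPair n {Mnn.bLink n (by omega)} (Mnn.aLevel n ∪ {Mnn.b j})) := by
  exact ⟨Mnn.maximalSTPair_aLink hn _, Mnn.maximalSTPair_bLink hn _⟩
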